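/- Let λ be a d-invariant rational lamination. If L is an infinite λ-unlinked class which is periodic, say m_d^n(L) = L, then the total degree δ^n(L) = ∏_{k=0}^{n-1} δ(m_d^k(L)) is strictly greater than 1, where δ(L') denotes the degree of the induced covering map on closure(L')/λ̂ ≅ R/Z. -/

import Mathlib

noncomputable section
open Set Function

/-- The circle `ℝ/ℤ`. -/
abbrev Circle1 := AddCircle (1 : ℝ)

/-- Multiplication by `d` on the circle. -/
def md (d : ℕ) (x : Circle1) : Circle1 := d • x

/-- The rational angles `ℚ/ℤ ⊆ ℝ/ℤ`. -/
def ratC : Set Circle1 := {x | ∃ q : ℚ, x = ((q : ℝ) : Circle1)}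

/-- `A` and `B` are unlinked: `B` is contained in a single connected
component of the complement of `A`. -/
def Unlinked (A B : Set Circle1) : Prop :=
  ∃ x ∈ Aᶜ, B ⊆ connectedComponentIn Aᶜ x

/-- `C` is a connected component of `S`. -/
def IsCompOf (C S : Set Circle1) : Prop :=
  ∃ x ∈ S, C = connectedComponentIn S x

/-- The class of `x` under a relation `r`. -/
def relClass (r : Circle1 → Circle1 → Prop) (x : Circle1) : Set Circle1 := {y | r x y}

/-- A rational lamination: a closed equivalence relation on `ℚ/ℤ` with finite,
pairwise unlinked classes. -/
structure RatLam where
  rel : Circle1 → Circle1 → Prop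
  rel_rat : ∀ x y, rel x y → x ∈ ratC ∧ y ∈ ratC
  refl : ∀ x ∈ ratC, rel x x
  symm : ∀ x y, rel x y → rel y x
  trans : ∀ x y z, rel x y → rel y z → rel x z
  closed' : ∀ x ∈ ratC, ∀ y ∈ ratC,
    (x, y) ∈ closure {p : Circle1 × Circle1 | rel p.1 p.2} → rel x y
  finiteClass : ∀ x, (relClass rel x).Finite
  unlinkedClass : ∀ x y, ¬ rel x y → Unlinked (relClass rel x) (relClass rel y)

/-- `m_d` maps `A` onto `B` in a consecutive-preserving way: the image of `A` is `B`
and the connected components of the complement of `A` are sent to components of the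
complement of `B` endpoint-wise. -/
def ConsecutiveImage (d : ℕ) (A B : Set Circle1) : Prop :=
  md d '' A = B ∧
    ∀ C, IsCompOf C Aᶜ → ∃ C', IsCompOf C' Bᶜ ∧ frontier C' = md d '' frontier C

/-- A `d`-invariant rational lamination. -/
structure InvRatLam (d : ℕ) extends RatLam where
  invariant : ∀ x ∈ ratC,
    ConsecutiveImage d (relClass rel x) (relClass rel (md d x))

/-- `m_d : A → m_d(A)` is `δ`-to-one. -/
def classDeg (d : ℕ) (A : Set Circle1) (δ : ℕ) : Prop :=
  ∀ y ∈ md d '' A, Set.ncard {x | x ∈ A ∧ md d x = y} = δ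

/-- The `λ`-unlinked relation on irrational angles: `θ ~ θ'` iff they lie in the same
connected component of the complement of every `λ`-class. -/
def UnlRel (r : Circle1 → Circle1 → Prop) (θ θ' : Circle1) : Prop :=
  θ ∉ ratC ∧ θ' ∉ ratC ∧
    (θ = θ' ∨ ∀ x ∈ ratC, θ' ∈ connectedComponentIn (relClass r x)ᶜ θ)

/-- `L` is a `λ`-unlinked class. -/
def IsUnlClass (r : Circle1 → Circle1 → Prop) (L : Set Circle1) : Prop :=
  ∃ θ, θ ∉ ratC ∧ L = {θ' | UnlRel r θ θ'}

/-! ### Helper lemmas -/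

lemma c1_add_int (x : ℝ) (n : ℤ) : ((x + n : ℝ) : Circle1) = (x : Circle1) := by
  rw [AddCircle.coe_add]
  have : ((n : ℝ) : Circle1) = 0 := (AddCircle.coe_eq_zero_iff (1 : ℝ)).2 ⟨n, by simp⟩
  rw [this, add_zero]

lemma c1_eq {x y : ℝ} (h : (x : Circle1) = (y : Circle1)) : ∃ n : ℤ, x = y + n := by
  have h2 : ((x - y : ℝ) : Circle1) = 0 := by rw [AddCircle.coe_sub, h, sub_self]
  obtain ⟨n, hn⟩ := (AddCircle.coe_eq_zero_iff (1 : ℝ)).1 h2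
  refine ⟨n, ?_⟩
  simp at hn
  linarith

lemma c1_surj (x : Circle1) : ∃ t : ℝ, (t : Circle1) = x := by
  obtain ⟨b, _, hb⟩ := AddCircle.eq_coe_Ico x
  exact ⟨b, hb⟩

lemma md_coe (D : ℕ) (x : ℝ) : md D (x : Circle1) = ((D * x : ℝ) : Circle1) := by
  unfold md
  rw [← AddCircle.coe_nsmul, nsmul_eq_mul]

lemma rat_iff (x : ℝ) : (x : Circle1) ∈ ratC ↔ ∃ q : ℚ, x = q := by
  constructor
  · rintro ⟨q, hq⟩
    obtain ⟨n, hn⟩ := c1_eq hq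
    exact ⟨q + n, by push_cast; exact hn⟩
  · rintro ⟨q, rfl⟩
    exact ⟨q, rfl⟩

lemma md_cont (D : ℕ) : Continuous (md D) := by
  unfold md
  exact continuous_nsmul D

lemma md_rat (D : ℕ) {x : Circle1} (hx : x ∈ ratC) : md D x ∈ ratC := by
  obtain ⟨q, rfl⟩ := hx
  exact ⟨D * q, by rw [md_coe]; push_cast; rfl⟩

instance c1_lc : LocallyConnectedSpace Circle1 := by
  have h : Topology.IsQuotientMap ((↑) : ℝ → Circle1) := isQuotientMap_quotient_mk'
  exact h.locallyConnectedSpace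

/-- A preconnected set avoiding `α, β` cannot meet both sides. -/
lemma sep2 {S : Set Circle1} (hS : IsPreconnected S) {σ α π β : ℝ} (h1 : σ < α) (h2 : α < π)
    (h3 : π < β) (h4 : β < σ + 1) (hα : (α : Circle1) ∉ S) (hβ : (β : Circle1) ∉ S)
    (hσ : (σ : Circle1) ∈ S) (hπ : (π : Circle1) ∈ S) : False := by
  have ho : IsOpenMap ((↑) : ℝ → Circle1) := QuotientAddGroup.isOpenMap_coe
  have := hS ((↑) '' Ioo α β) ((↑) '' Ioo β (α + 1)) (ho _ isOpen_Ioo) (ho _ isOpen_Ioo) ?_ ?_ ?_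
  · obtain ⟨y, -, ⟨u, hu, rfl⟩, ⟨v, hv, hvu⟩⟩ := this
    obtain ⟨n, hn⟩ := c1_eq hvu
    have a1 : (0 : ℝ) < n := by linarith [hu.1, hu.2, hv.1, hv.2]
    have a2 : (n : ℝ) < 1 := by linarith [hu.1, hu.2, hv.1, hv.2]
    have b1 : 0 < n := by exact_mod_cast a1
    have b2 : n < 1 := by exact_mod_cast a2
    omega
  · intro y hy
    have : y ∈ ((↑) : ℝ → Circle1) '' Ico α (α + 1) := by
      rw [AddCircle.coe_image_Ico_eq]; trivial
    obtain ⟨u, hu, rfl⟩ := this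
    have u1 : u ≠ α := by rintro rfl; exact hα hy
    have u2 : u ≠ β := by rintro rfl; exact hβ hy
    have u3 : α < u := lt_of_le_of_ne hu.1 (Ne.symm u1)
    rcases lt_or_gt_of_ne u2 with h | h
    · exact Or.inl ⟨u, ⟨u3, h⟩, rfl⟩
    · exact Or.inr ⟨u, ⟨h, hu.2⟩, rfl⟩
  · exact ⟨π, hπ, π, ⟨h2, h3⟩, rfl⟩
  · refine ⟨σ, hσ, σ + 1, ⟨h4, by linarith⟩, ?_⟩
    have := c1_add_int σ 1
    simpa using this

lemma comp_closure {A : Set Circle1} (hA : IsClosed A) (θ : Circle1) :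
    closure (connectedComponentIn Aᶜ θ) ⊆ connectedComponentIn Aᶜ θ ∪ A := by
  intro y hy
  by_cases hyA : y ∈ A
  · exact Or.inr hyA
  left
  have ho : IsOpen (connectedComponentIn Aᶜ y) := hA.isOpen_compl.connectedComponentIn
  obtain ⟨w, hw1, hw2⟩ := mem_closure_iff.1 hy _ ho (mem_connectedComponentIn hyA)
  rw [connectedComponentIn_eq hw2, ← connectedComponentIn_eq hw1]
  exact mem_connectedComponentIn hyA

/-- Along a real interval missing `A`, membership in the component is constant. -/
lemma comp_interval {A : Set Circle1} {θ : Circle1} {u v : ℝ} (huv : u ≤ v)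
    (h : ∀ q ∈ Icc u v, (q : Circle1) ∉ A) :
    (u : Circle1) ∈ connectedComponentIn Aᶜ θ ↔ (v : Circle1) ∈ connectedComponentIn Aᶜ θ := by
  have hc : IsPreconnected (((↑) : ℝ → Circle1) '' Icc u v) :=
    isPreconnected_Icc.image _ (AddCircle.continuous_mk' 1).continuousOn
  have hsub : ((↑) : ℝ → Circle1) '' Icc u v ⊆ Aᶜ := by
    rintro _ ⟨q, hq, rfl⟩
    exact h q hq
  have hu : (u : Circle1) ∈ ((↑) : ℝ → Circle1) '' Icc u v := ⟨u, left_mem_Icc.2 huv, rfl⟩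
  have hv : (v : Circle1) ∈ ((↑) : ℝ → Circle1) '' Icc u v := ⟨v, right_mem_Icc.2 huv, rfl⟩
  constructor
  · intro h'
    rw [connectedComponentIn_eq h']
    exact hc.subset_connectedComponentIn hu hsub hv
  · intro h'
    rw [connectedComponentIn_eq h']
    exact hc.subset_connectedComponentIn hv hsub hu

/-- Bundled setting: `L` is an unlinked class, `md D` maps it injectively into itself. -/
structure Setup (lam : RatLam) (θ : Circle1) (L : Set Circle1) (D : ℕ) : Prop where
  two_le : 2 ≤ D
  irr : θ ∉ ratC
  mem : ∀ y, y ∈ L ↔ y ∉ ratC ∧ ∀ x ∈ ratC, y ∈ connectedComponentIn (relClass lam.rel x)ᶜ θ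
  inv : ∀ x y, lam.rel x y → lam.rel (md D x) (md D y)
  maps : ∀ y ∈ L, md D y ∈ L
  inj : ∀ x ∈ L, ∀ y ∈ L, md D x = md D y → x = y

lemma cls_closed (lam : RatLam) (x : Circle1) : IsClosed (relClass lam.rel x) :=
  (lam.finiteClass x).isClosed

lemma cls_rat (lam : RatLam) {x y : Circle1} (h : y ∈ relClass lam.rel x) : y ∈ ratC :=
  (lam.rel_rat _ _ h).2

lemma nested (lam : RatLam) {θ : Circle1} (hθ : θ ∉ ratC) {x x' y : Circle1}
    (hy : y ∉ connectedComponentIn (relClass lam.rel x)ᶜ θ)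
    (hy' : y ∉ connectedComponentIn (relClass lam.rel x')ᶜ θ) :
    connectedComponentIn (relClass lam.rel x)ᶜ θ ⊆ connectedComponentIn (relClass lam.rel x')ᶜ θ ∨
    connectedComponentIn (relClass lam.rel x')ᶜ θ ⊆ connectedComponentIn (relClass lam.rel x)ᶜ θ := by
  by_cases hr : lam.rel x x'
  · left
    have : relClass lam.rel x = relClass lam.rel x' := by
      ext w
      exact ⟨fun h => lam.trans _ _ _ (lam.symm _ _ hr) h, fun h => lam.trans _ _ _ hr h⟩
    rw [this]
  have hr' : ¬ lam.rel x' x := fun h => hr (lam.symm _ _ h)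
  have hu := lam.unlinkedClass _ _ hr
  have hu' := lam.unlinkedClass _ _ hr'
  have hcA := cls_closed lam x
  have hcB := cls_closed lam x'
  have hθA : θ ∉ relClass lam.rel x := fun h => hθ (cls_rat lam h)
  have hθB : θ ∉ relClass lam.rel x' := fun h => hθ (cls_rat lam h)
  generalize relClass lam.rel x = A at *
  generalize relClass lam.rel x' = B at *
  have key : ∀ {A B : Set Circle1}, θ ∉ A → Unlinked A B →
      ¬ (connectedComponentIn Aᶜ θ ⊆ connectedComponentIn Bᶜ θ) → B ⊆ connectedComponentIn Aᶜ θ := by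
    intro A B hA hu hn
    have : ∃ w ∈ connectedComponentIn Aᶜ θ, w ∈ B := by
      by_contra hcon
      push Not at hcon
      exact hn (isPreconnected_connectedComponentIn.subset_connectedComponentIn
        (mem_connectedComponentIn hA) hcon)
    obtain ⟨w, hw, hwB⟩ := this
    obtain ⟨c, hc, hBc⟩ := hu
    rw [connectedComponentIn_eq hw, ← connectedComponentIn_eq (hBc hwB)]
    exact hBc
  by_contra hcon
  push Not at hcon
  have h1 := key hθA hu hcon.1
  have h2 := key hθB hu' hcon.2
  have hcl : IsClopen (connectedComponentIn Aᶜ θ ∪ connectedComponentIn Bᶜ θ) := by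
    constructor
    · apply isClosed_of_closure_subset
      rw [closure_union]
      refine union_subset ((comp_closure hcA θ).trans ?_) ((comp_closure hcB θ).trans ?_)
      · exact union_subset subset_union_left (h2.trans subset_union_right)
      · exact union_subset subset_union_right (h1.trans subset_union_left)
    · exact hcA.isOpen_compl.connectedComponentIn.union hcB.isOpen_compl.connectedComponentIn
  have := hcl.eq_univ ⟨θ, Or.inl (mem_connectedComponentIn hθA)⟩
  have hy2 : y ∈ connectedComponentIn Aᶜ θ ∪ connectedComponentIn Bᶜ θ := by rw [this]; trivial
  exact hy2.elim hy hy'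

lemma irr_add_rat {x : ℝ} (hx : (x : Circle1) ∉ ratC) (q : ℚ) : ((x + q : ℝ) : Circle1) ∉ ratC := by
  rw [rat_iff] at *
  rintro ⟨q', h⟩
  exact hx ⟨q' - q, by push_cast; linarith⟩

/-- Two angles not separated from each other by the boundary of `L`. -/
def RR (lam : RatLam) (θ : Circle1) (y z : ℝ) : Prop :=
  ∃ x ∈ ratC, (y : Circle1) ∉ connectedComponentIn (relClass lam.rel x)ᶜ θ ∧
    (z : Circle1) ∉ connectedComponentIn (relClass lam.rel x)ᶜ θ

lemma RR_trans {lam : RatLam} {θ : Circle1} (hθ : θ ∉ ratC) {a b c : ℝ}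
    (h1 : RR lam θ a b) (h2 : RR lam θ b c) : RR lam θ a c := by
  obtain ⟨x, hx, ha, hb⟩ := h1
  obtain ⟨x', hx', hb', hc⟩ := h2
  rcases nested lam hθ hb hb' with h | h
  · exact ⟨x, hx, ha, fun hh => hc (h hh)⟩
  · exact ⟨x', hx', fun hh => ha (h hh), hc⟩

lemma mono_step {lam : RatLam} {θ : Circle1} {L : Set Circle1} {D : ℕ} (H : Setup lam θ L D)
    {a b a' b' : ℝ} (k : ℕ) {x : Circle1} (hx : x ∈ ratC)
    (hbirr : (b : Circle1) ∉ ratC) (hairr : (a : Circle1) ∉ ratC)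
    (ha'irr : (a' : Circle1) ∉ ratC) (hb'irr : (b' : Circle1) ∉ ratC)
    (hb : (b : Circle1) ∈ connectedComponentIn (relClass lam.rel x)ᶜ θ)
    (ha : (a : Circle1) ∉ connectedComponentIn (relClass lam.rel x)ᶜ θ)
    (ha' : (a' : Circle1) ∉ connectedComponentIn (relClass lam.rel x)ᶜ θ)
    (hb' : (b' : Circle1) ∈ connectedComponentIn (relClass lam.rel x)ᶜ θ)
    (hba : b < a) (hab' : a' < b') (haa' : (D : ℝ) * a' = D * a + k)
    (hbb' : (D : ℝ) * b' = D * b + k + 1)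
    (hfa : md D (a : Circle1) ∈ L) (hfb : md D (b : Circle1) ∈ L) : False := by
  have hD : (0 : ℝ) < D := by have := H.two_le; positivity
  have e1 : ∃ q ∈ Icc b a, (q : Circle1) ∈ relClass lam.rel x := by
    by_contra hcon
    push Not at hcon
    exact ha ((comp_interval hba.le hcon).1 hb)
  have e2 : ∃ q ∈ Icc a' b', (q : Circle1) ∈ relClass lam.rel x := by
    by_contra hcon
    push Not at hcon
    exact ha' ((comp_interval hab'.le hcon).2 hb')
  obtain ⟨q, hq, hqx⟩ := e1
  obtain ⟨r, hr, hrx⟩ := e2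
  have ne1 : b ≠ q := by rintro rfl; exact hbirr (cls_rat lam hqx)
  have ne2 : q ≠ a := by rintro rfl; exact hairr (cls_rat lam hqx)
  have ne3 : a' ≠ r := by rintro rfl; exact ha'irr (cls_rat lam hrx)
  have ne4 : r ≠ b' := by rintro rfl; exact hb'irr (cls_rat lam hrx)
  have l1 := mul_lt_mul_of_pos_left (lt_of_le_of_ne hq.1 ne1) hD
  have l2 := mul_lt_mul_of_pos_left (lt_of_le_of_ne hq.2 ne2) hD
  have l3 := mul_lt_mul_of_pos_left (lt_of_le_of_ne hr.1 ne3) hD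
  have l4 := mul_lt_mul_of_pos_left (lt_of_le_of_ne hr.2 ne4) hD
  have hDx : md D x ∈ ratC := md_rat D hx
  have mq := H.inv _ _ hqx
  have mr := H.inv _ _ hrx
  have sa := ((H.mem _).1 hfa).2 _ hDx
  have sb := ((H.mem _).1 hfb).2 _ hDx
  rw [md_coe] at sa sb mq mr
  have hβ : ((D * r + ((-(k : ℤ) : ℤ) : ℝ) : ℝ) : Circle1) = ((D * r : ℝ) : Circle1) := c1_add_int _ _
  refine sep2 (isPreconnected_connectedComponentIn (F := (relClass lam.rel (md D x))ᶜ) (x := θ))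
    (σ := D * b) (α := D * q) (π := D * a) (β := D * r + ((-(k : ℤ) : ℤ) : ℝ)) l1 l2 ?_ ?_ ?_ ?_ sb sa
  · push_cast; linarith
  · push_cast; linarith
  · intro hh
    exact connectedComponentIn_subset _ _ hh mq
  · intro hh
    rw [hβ] at hh
    exact connectedComponentIn_subset _ _ hh mr

lemma mono_main {lam : RatLam} {θ : Circle1} {L : Set Circle1} {D : ℕ} (H : Setup lam θ L D)
    {p s t : ℝ} (hp : (p : Circle1) ∈ L) (hs : (s : Circle1) ∈ L) (ht : (t : Circle1) ∈ L)
    (hps : p < s) (hst : s < t) (htp : t < p + 1) :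
    Int.fract (D * (s - p)) ≤ Int.fract (D * (t - p)) := by
  by_contra hcon
  push Not at hcon
  have hD : (0 : ℝ) < D := by have := H.two_le; positivity
  have hD0 : (D : ℝ) ≠ 0 := hD.ne'
  have hpi := ((H.mem _).1 hp).1
  have hsi := ((H.mem _).1 hs).1
  obtain ⟨i, hi⟩ : ∃ i : ℤ, i = ⌊(D * (s - p) : ℝ)⌋ := ⟨_, rfl⟩
  obtain ⟨k, hk⟩ : ∃ k : ℤ, k = ⌊(D * (t - p) : ℝ)⌋ := ⟨_, rfl⟩
  have fs : Int.fract (D * (s - p) : ℝ) = D * (s - p) - i := by rw [hi]; rfl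
  have ft : Int.fract (D * (t - p) : ℝ) = D * (t - p) - k := by rw [hk]; rfl
  have fs1 := Int.fract_lt_one (D * (s - p) : ℝ)
  have ft0 := Int.fract_nonneg (D * (t - p) : ℝ)
  rw [fs, ft] at hcon
  rw [fs] at fs1
  rw [ft] at ft0
  have m1 : (D : ℝ) * (s - p) < D * (t - p) := mul_lt_mul_of_pos_left (by linarith) hD
  have m2 : (D : ℝ) * (t - p) < D * 1 := mul_lt_mul_of_pos_left (by linarith) hD
  have i0 : 0 ≤ i := by rw [hi]; exact Int.floor_nonneg.2 (mul_nonneg hD.le (by linarith))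
  have ik : i < k := by
    have : (i : ℝ) < k := by linarith
    exact_mod_cast this
  have kD : k < D := by
    have : (k : ℝ) < D := by linarith
    exact_mod_cast this
  obtain ⟨n, hn⟩ : ∃ n : ℕ, k = i + n := ⟨(k - i).toNat, by omega⟩
  set P : ℕ → ℝ := fun m => p + ((((i : ℚ) + m) / D : ℚ) : ℝ) with hP
  set S : ℕ → ℝ := fun m => s + (((m : ℚ) / D : ℚ) : ℝ) with hS
  have DP : ∀ m, (D : ℝ) * P m = D * p + (i + m) := by
    intro m; simp only [hP]; push_cast; field_simp
  have DS : ∀ m, (D : ℝ) * S m = D * s + m := by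
    intro m; simp only [hS]; push_cast; field_simp
  have Pirr : ∀ m, (P m : Circle1) ∉ ratC := fun m => irr_add_rat hpi _
  have Sirr : ∀ m, (S m : Circle1) ∉ ratC := fun m => irr_add_rat hsi _
  have cmp : ∀ {x y : ℝ}, (D : ℝ) * x < D * y → x < y := fun h => lt_of_mul_lt_mul_left h hD.le
  have fP : ∀ m, md D (P m : Circle1) = md D (p : Circle1) := by
    intro m
    rw [md_coe, md_coe, DP]
    have := c1_add_int (D * p) (i + m)
    push_cast at this
    exact this
  have fS : ∀ m, md D (S m : Circle1) = md D (s : Circle1) := by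
    intro m
    rw [md_coe, md_coe, DS]
    have := c1_add_int (D * s) m
    push_cast at this
    exact this
  have PS : ∀ m, P m < S m := by
    intro m; apply cmp; rw [DP, DS]; linarith
  have SP : ∀ m, S m < P (m + 1) := by
    intro m; apply cmp; rw [DP, DS]; push_cast; linarith
  have PL : ∀ m, 1 ≤ m → m ≤ n → (P m : Circle1) ∉ L := by
    intro m h1 h2 hmem
    obtain ⟨j, hj⟩ := c1_eq (H.inj _ hmem _ hp (fP m))
    have e := DP m
    rw [hj] at e
    have e2 : (D : ℝ) * j = i + m := by linarith
    have e3 : (D : ℤ) * j = i + m := by exact_mod_cast e2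
    have hj0 : 0 < j := by
      by_contra hneg
      push Not at hneg
      have := H.two_le
      nlinarith
    have : (D : ℤ) ≤ D * j := by nlinarith
    omega
  have main : ∀ m, 1 ≤ m → m ≤ n → RR lam θ (P m) (S m) := by
    intro m
    induction m using Nat.strong_induction_on with
    | _ m ih =>
    intro h1 h2
    classical
    by_contra hno
    have hself : RR lam θ (P m) (P m) := by
      have := PL m h1 h2
      rw [H.mem] at this
      push Not at this
      obtain ⟨x, hx, hxx⟩ := this (Pirr m)
      exact ⟨x, hx, hxx, hxx⟩
    have hex : ∃ l, 1 ≤ l ∧ RR lam θ (P l) (P m) := ⟨m, h1, hself⟩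
    obtain ⟨l, ⟨hl1, hl2⟩, hmin⟩ : ∃ l, (1 ≤ l ∧ RR lam θ (P l) (P m)) ∧
        ∀ j < l, ¬ (1 ≤ j ∧ RR lam θ (P j) (P m)) :=
      ⟨Nat.find hex, Nat.find_spec hex, fun j hj => Nat.find_min hex hj⟩
    have hlm : l ≤ m := by
      by_contra hh
      push Not at hh
      exact hmin m hh ⟨h1, hself⟩
    obtain ⟨x, hx, hPl, hPm⟩ := hl2
    have hSm : (S m : Circle1) ∈ connectedComponentIn (relClass lam.rel x)ᶜ θ := by
      by_contra hh
      exact hno ⟨x, hx, hPm, hh⟩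
    obtain ⟨j, rfl⟩ : ∃ j, l = j + 1 := ⟨l - 1, by omega⟩
    have hSj : (S j : Circle1) ∈ connectedComponentIn (relClass lam.rel x)ᶜ θ := by
      rcases Nat.eq_zero_or_pos j with rfl | hj
      · have : S 0 = s := by simp [hS]
        rw [this]
        exact ((H.mem _).1 hs).2 x hx
      · by_contra hh
        exact hmin j (by omega) ⟨hj, RR_trans H.irr (ih j (by omega) hj (by omega)) ⟨x, hx, hh, hPm⟩⟩
    obtain ⟨c, rfl⟩ : ∃ c, m = j + 1 + c := ⟨m - (j + 1), by omega⟩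
    refine mono_step H (a := P (j + 1)) (b := S j) (a' := P (j + 1 + c)) (b' := S (j + 1 + c)) c hx
      (Sirr _) (Pirr _) (Pirr _) (Sirr _) hSj hPl hPm hSm (SP j) (PS _) ?_ ?_ ?_ ?_
    · rw [DP, DP]; push_cast; ring
    · rw [DS, DS]; push_cast; ring
    · rw [fP]; exact H.maps _ hp
    · rw [fS]; exact H.maps _ hs
  have n1 : 1 ≤ n := by omega
  obtain ⟨x, hx, h1, h2⟩ := main n n1 le_rfl
  have htU := ((H.mem _).1 ht).2 x hx
  have hsU := ((H.mem _).1 hs).2 x hx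
  have knr : (k : ℝ) = i + n := by exact_mod_cast hn
  have Pt : P n ≤ t := by
    apply le_of_mul_le_mul_left _ hD
    rw [DP]; linarith
  have Pt' : P n < t := by
    refine lt_of_le_of_ne Pt ?_
    intro h
    rw [h] at h1
    exact h1 htU
  refine sep2 (isPreconnected_connectedComponentIn (F := (relClass lam.rel x)ᶜ) (x := θ))
    (σ := s) (α := P n) (π := t) (β := S n) ?_ Pt' ?_ ?_ h1 h2 hsU htU
  · have := SP 0
    apply cmp
    rw [DP]
    have : (1 : ℝ) ≤ n := by exact_mod_cast n1
    linarith
  · apply cmp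
    rw [DS]; linarith
  · apply cmp
    rw [DS]
    have : (n : ℤ) < D := by omega
    have : (n : ℝ) < D := by exact_mod_cast this
    linarith

lemma seq_false {D : ℕ} (hD : 2 ≤ D) {z l : ℝ} {x : ℕ → ℝ}
    (hx : ∀ n, x (n + 1) = z + Int.fract (D * (x n - z)))
    (hl : Filter.Tendsto x Filter.atTop (nhds l)) (hne : ∀ n, x (n + 1) ≠ x n) : False := by
  have hl1 : Filter.Tendsto (fun n => x (n + 1)) Filter.atTop (nhds l) :=
    hl.comp (Filter.tendsto_add_atTop_nat 1)
  have he : Filter.Tendsto (fun n => |x (n + 1) - x n|) Filter.atTop (nhds 0) := by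
    have := (hl1.sub hl).abs
    simpa using this
  have hDr : (2 : ℝ) ≤ D := by exact_mod_cast hD
  have hpos : (0 : ℝ) < 1 / (2 * (D + 1)) := by positivity
  obtain ⟨N, hN⟩ := Filter.eventually_atTop.1 (he.eventually_lt_const hpos)
  have step : ∀ n ≥ N, |x (n + 1) - x n| ≤ |x (n + 1 + 1) - x (n + 1)| := by
    intro n hn
    have e : x (n + 1 + 1) - x (n + 1) = D * (x (n + 1) - x n)
        - ((⌊(D * (x (n + 1) - z) : ℝ)⌋ - ⌊(D * (x n - z) : ℝ)⌋ : ℤ) : ℝ) := by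
      have e1 := hx (n + 1)
      have e0 := hx n
      rw [Int.fract] at e1 e0
      push_cast
      linarith
    generalize (⌊(D * (x (n + 1) - z) : ℝ)⌋ - ⌊(D * (x n - z) : ℝ)⌋ : ℤ) = j at e
    have a0 := hN n hn
    have a1 := hN (n + 1) (by omega)
    have hj : |(j : ℝ)| < 1 := by
      have ej : (j : ℝ) = D * (x (n + 1) - x n) - (x (n + 1 + 1) - x (n + 1)) := by linarith
      rw [ej]
      refine (abs_sub _ _).trans_lt ?_
      rw [abs_mul, Nat.abs_cast]
      have : (D : ℝ) * |x (n + 1) - x n| ≤ D * (1 / (2 * (D + 1))) := by gcongr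
      have e3 : (D : ℝ) * (1 / (2 * (D + 1))) + 1 / (2 * (D + 1)) = 1 / 2 := by field_simp
      linarith
    have hj0 : j = 0 := by
      rw [← Int.cast_abs] at hj
      have : |j| < 1 := by exact_mod_cast hj
      exact Int.abs_lt_one_iff.1 this
    rw [e, hj0]
    simp only [Int.cast_zero, sub_zero, abs_mul, Nat.abs_cast]
    nlinarith [abs_nonneg (x (n + 1) - x n)]
  have big : ∀ m, |x (N + 1) - x N| ≤ |x (N + m + 1) - x (N + m)| := by
    intro m
    induction m with
    | zero => simp
    | succ m ih => exact ih.trans (step (N + m) (by omega))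
  have hp : 0 < |x (N + 1) - x N| := abs_pos.2 (sub_ne_zero.2 (hne N))
  obtain ⟨M, hM⟩ := Filter.eventually_atTop.1 (he.eventually_lt_const hp)
  have h1 := hM (N + M) (by omega)
  have h2 := big M
  linarith

lemma closure_near {L : Set Circle1} {z : ℝ} (hz : (z : Circle1) ∈ closure L) {Q : ℝ → Prop}
    (hQ : ∀ᶠ p in nhds z, Q p) : ∃ p : ℝ, (p : Circle1) ∈ L ∧ Q p := by
  obtain ⟨O, hO, hOo, hzO⟩ := eventually_nhds_iff.1 hQ
  have ho : IsOpenMap ((↑) : ℝ → Circle1) := QuotientAddGroup.isOpenMap_coe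
  obtain ⟨w, ⟨p, hp, rfl⟩, hw⟩ := mem_closure_iff.1 hz _ (ho _ hOo) ⟨z, hzO, rfl⟩
  exact ⟨p, hw, hO p hp⟩

lemma no_fixed {lam : RatLam} {θ : Circle1} {L : Set Circle1} {D : ℕ} (H : Setup lam θ L D)
    (hne : L.Nonempty) {z : ℝ} (hz : (z : Circle1) ∈ closure L) (hzr : (z : Circle1) ∈ ratC)
    (hfix : md D (z : Circle1) = (z : Circle1)) : False := by
  obtain ⟨qz, hqz⟩ := (rat_iff z).1 hzr
  have hD : (0 : ℝ) < D := by have := H.two_le; positivity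
  have hirr : ∀ x : ℝ, (x : Circle1) ∈ L → (x : Circle1) ∉ ratC := fun x hx => ((H.mem _).1 hx).1
  -- fractional parts are nonzero
  have hfr : ∀ x : ℝ, (x : Circle1) ∈ L → Int.fract (D * (x - z) : ℝ) ≠ 0 := by
    intro x hx h0
    apply hirr x hx
    rw [rat_iff]
    rw [Int.fract] at h0
    refine ⟨qz + (⌊(D * (x - z) : ℝ)⌋ : ℚ) / D, ?_⟩
    push_cast
    rw [← hqz]
    field_simp
    linarith
  have hG : ∀ x : ℝ, (x : Circle1) ∈ L → ((z + Int.fract (D * (x - z) : ℝ) : ℝ) : Circle1) ∈ L := by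
    intro x hx
    have : ((z + Int.fract (D * (x - z) : ℝ) : ℝ) : Circle1) = md D (x : Circle1) := by
      rw [AddCircle.coe_add, AddCircle.coe_fract, mul_sub, AddCircle.coe_sub, ← md_coe, ← md_coe, hfix]
      abel
    rw [this]
    exact H.maps _ hx
  have hmono : ∀ x y : ℝ, (x : Circle1) ∈ L → (y : Circle1) ∈ L → z < x → x ≤ y → y < z + 1 →
      Int.fract (D * (x - z) : ℝ) ≤ Int.fract (D * (y - z) : ℝ) := by
    intro x y hx hy h1 h2 h3
    rcases h2.eq_or_lt with rfl | h2
    · exact le_rfl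
    obtain ⟨i, hi⟩ : ∃ i : ℤ, i = ⌊(D * (x - z) : ℝ)⌋ := ⟨_, rfl⟩
    obtain ⟨k, hk⟩ : ∃ k : ℤ, k = ⌊(D * (y - z) : ℝ)⌋ := ⟨_, rfl⟩
    have fs : Int.fract (D * (x - z) : ℝ) = D * (x - z) - i := by rw [hi]; rfl
    have ft : Int.fract (D * (y - z) : ℝ) = D * (y - z) - k := by rw [hk]; rfl
    have a1 := Int.fract_lt_one (D * (x - z) : ℝ)
    have a2 := Int.fract_lt_one (D * (y - z) : ℝ)
    have a3 := lt_of_le_of_ne (Int.fract_nonneg (D * (x - z) : ℝ)) (hfr x hx).symm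
    have a4 := lt_of_le_of_ne (Int.fract_nonneg (D * (y - z) : ℝ)) (hfr y hy).symm
    rw [fs] at a1 a3
    rw [ft] at a2 a4
    have cx : Continuous (fun p : ℝ => (D * (x - p) : ℝ)) := by fun_prop
    have cy : Continuous (fun p : ℝ => (D * (y - p) : ℝ)) := by fun_prop
    have c1 : Continuous (fun p : ℝ => p + 1) := by fun_prop
    have ev : ∀ᶠ p in nhds z, p < x ∧ y < p + 1 ∧ (i : ℝ) < D * (x - p) ∧ (D * (x - p) : ℝ) < i + 1 ∧
        (k : ℝ) < D * (y - p) ∧ (D * (y - p) : ℝ) < k + 1 := by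
      refine (gt_mem_nhds h1).and ((c1.continuousAt.eventually_const_lt h3).and
        ((cx.continuousAt.eventually_const_lt ?_).and ((cx.continuousAt.eventually_lt_const ?_).and
        ((cy.continuousAt.eventually_const_lt ?_).and (cy.continuousAt.eventually_lt_const ?_))))) <;>
      linarith
    obtain ⟨p, hp, b1, b2, b3, b4, b5, b6⟩ := closure_near hz ev
    have M := mono_main H hp hx hy b1 h2 b2
    have g1 : ⌊(D * (x - p) : ℝ)⌋ = i := Int.floor_eq_iff.2 ⟨b3.le, b4⟩
    have g2 : ⌊(D * (y - p) : ℝ)⌋ = k := Int.floor_eq_iff.2 ⟨b5.le, b6⟩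
    rw [Int.fract, Int.fract, g1, g2] at M
    rw [fs, ft]
    linarith
  -- iterate
  obtain ⟨y0, hy0⟩ := hne
  obtain ⟨t0, rfl⟩ := c1_surj y0
  let G : ℝ → ℝ := fun x => z + Int.fract (D * (x - z) : ℝ)
  let x : ℕ → ℝ := fun n => G^[n + 1] t0
  have hx : ∀ n, x (n + 1) = G (x n) := fun n => Function.iterate_succ_apply' G (n + 1) t0
  have hxL : ∀ n, (x n : Circle1) ∈ L := by
    intro n
    induction n with
    | zero => exact hG t0 hy0
    | succ n ih => rw [hx]; exact hG _ ih
  have hbd : ∀ w : ℝ, (w : Circle1) ∈ L → z < G w ∧ G w < z + 1 := by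
    intro w hw
    have a3 := lt_of_le_of_ne (Int.fract_nonneg (D * (w - z) : ℝ)) (hfr w hw).symm
    have a1 := Int.fract_lt_one (D * (w - z) : ℝ)
    exact ⟨by simp only [G]; linarith, by simp only [G]; linarith⟩
  have hxb : ∀ n, z < x n ∧ x n < z + 1 := by
    intro n
    rcases n with _ | n
    · exact hbd t0 hy0
    · rw [hx]; exact hbd _ (hxL n)
  have hGm : ∀ a b : ℝ, (a : Circle1) ∈ L → (b : Circle1) ∈ L → z < a → a ≤ b → b < z + 1 →
      G a ≤ G b := by
    intro a b ha hb h1 h2 h3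
    have := hmono a b ha hb h1 h2 h3
    simp only [G]; linarith
  have hxne : ∀ n, x (n + 1) ≠ x n := by
    intro n h
    rw [hx] at h
    apply hirr _ (hxL n)
    rw [rat_iff]
    simp only [G] at h
    rw [Int.fract] at h
    have hD1 : (D : ℝ) - 1 ≠ 0 := by
      have : (2 : ℝ) ≤ D := by exact_mod_cast H.two_le
      linarith
    refine ⟨qz + (⌊(D * (x n - z) : ℝ)⌋ : ℚ) / (D - 1), ?_⟩
    push_cast
    rw [← hqz]
    field_simp
    linarith
  rcases le_total (x 0) (x 1) with h | h
  · have hm : Monotone x := by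
      apply monotone_nat_of_le_succ
      intro n
      induction n with
      | zero => exact h
      | succ n ih =>
        rw [hx n, hx (n + 1)]
        exact hGm _ _ (hxL _) (hxL _) (hxb _).1 ih (hxb _).2
    exact seq_false H.two_le hx (tendsto_atTop_ciSup hm
      ⟨z + 1, by rintro _ ⟨n, rfl⟩; exact (hxb n).2.le⟩) hxne
  · have hm : Antitone x := by
      apply antitone_nat_of_succ_le
      intro n
      induction n with
      | zero => exact h
      | succ n ih =>
        rw [hx n, hx (n + 1)]
        exact hGm _ _ (hxL _) (hxL _) (hxb _).1 ih (hxb _).2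
    exact seq_false H.two_le hx (tendsto_atTop_ciInf hm
      ⟨z, by rintro _ ⟨n, rfl⟩; exact (hxb n).1.le⟩) hxne

lemma md_expand {D : ℕ} (hD : 0 < D) {x y : Circle1} (h : dist x y < 1 / (2 * D)) :
    (D : ℝ) * dist x y ≤ dist (md D x) (md D y) := by
  have hDr : (0 : ℝ) < D := by positivity
  obtain ⟨t, ht⟩ := c1_surj (x - y)
  have e : (((t + (-round t : ℤ) : ℝ)) : Circle1) = x - y := by rw [c1_add_int, ht]
  have n1 : ‖x - y‖ = |t + ((-round t : ℤ) : ℝ)| := by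
    rw [← ht, UnitAddCircle.norm_eq]
    push_cast
    rw [sub_eq_add_neg]
  generalize (t + ((-round t : ℤ) : ℝ)) = u at *
  have e2 : md D x - md D y = ((D * u : ℝ) : Circle1) := by
    rw [← md_coe, e]; unfold md; rw [nsmul_sub]
  rw [dist_eq_norm] at *
  rw [dist_eq_norm, e2, n1]
  rw [n1] at h
  have h2 : |(D * u : ℝ)| ≤ |(1 : ℝ)| / 2 := by
    rw [abs_mul, Nat.abs_cast, abs_one]
    have := mul_le_mul_of_nonneg_left h.le hDr.le
    have e3 : (D : ℝ) * (1 / (2 * D)) = 1 / 2 := by field_simp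
    linarith
  rw [(AddCircle.norm_coe_eq_abs_iff 1 one_ne_zero).2 h2, abs_mul, Nat.abs_cast]

lemma compact_false {L : Set Circle1} {D : ℕ} (hD : 2 ≤ D) (hc : IsClosed L) (hinf : L.Infinite)
    (hmaps : ∀ y ∈ L, md D y ∈ L) (hinj : ∀ x ∈ L, ∀ y ∈ L, md D x = md D y → x = y) : False := by
  have hDr : (2 : ℝ) ≤ D := by exact_mod_cast hD
  have hδ : (0 : ℝ) < 1 / (2 * D) := by positivity
  obtain ⟨ε, hε, hE⟩ : ∃ ε > 0, ∀ x ∈ L, ∀ y ∈ L, dist (md D x) (md D y) < ε →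
      dist x y < 1 / (2 * D) := by
    have hcl : IsClosed ({w : Circle1 × Circle1 | w.1 ∈ L ∧ w.2 ∈ L ∧ 1 / (2 * D) ≤ dist w.1 w.2}) :=
      (hc.preimage continuous_fst).inter ((hc.preimage continuous_snd).inter
        (isClosed_le continuous_const (continuous_fst.dist continuous_snd)))
    have hco := hcl.isCompact
    by_cases hemp : ({w : Circle1 × Circle1 | w.1 ∈ L ∧ w.2 ∈ L ∧
        1 / (2 * D) ≤ dist w.1 w.2}).Nonempty
    · obtain ⟨w, hw, hmin⟩ := hco.exists_isMinOn hemp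
        (f := fun w => dist (md D w.1) (md D w.2))
        (((md_cont D).comp continuous_fst).dist ((md_cont D).comp continuous_snd)).continuousOn
      refine ⟨dist (md D w.1) (md D w.2), ?_, ?_⟩
      · apply dist_pos.2
        intro h
        have := hinj _ hw.1 _ hw.2.1 h
        have h3 := hw.2.2
        rw [this, dist_self] at h3
        linarith
      · intro x hx y hy hlt
        by_contra hcon
        push Not at hcon
        have := hmin (show (x, y) ∈ _ from ⟨hx, hy, hcon⟩)
        simp only [Set.mem_setOf_eq] at this
        linarith
    · refine ⟨1, one_pos, fun x hx y hy _ => ?_⟩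
      by_contra hcon
      push Not at hcon
      exact hemp ⟨(x, y), hx, hy, hcon⟩
  have step : ∀ x ∈ L, ∀ y ∈ L, dist (md D x) (md D y) < ε →
      dist x y ≤ dist (md D x) (md D y) / 2 := by
    intro x hx y hy h
    have := md_expand (by omega) (hE x hx y hy h)
    have h0 : 0 ≤ dist x y := dist_nonneg
    nlinarith
  have iter : ∀ k, ∀ x ∈ L, ∀ y ∈ L, dist ((md D)^[k] x) ((md D)^[k] y) < ε →
      dist x y ≤ dist ((md D)^[k] x) ((md D)^[k] y) / 2 ^ k := by
    intro k
    induction k with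
    | zero => intro x hx y hy h; simp
    | succ k ih =>
      intro x hx y hy h
      rw [Function.iterate_succ_apply, Function.iterate_succ_apply] at *
      have h1 := ih _ (hmaps x hx) _ (hmaps y hy) h
      have h2 : dist (md D x) (md D y) < ε := by
        refine (h1.trans (div_le_self dist_nonneg (one_le_pow₀ (by norm_num)))).trans_lt h
      have h3 := step x hx y hy h2
      rw [pow_succ, ← div_div]
      linarith
  have hmk : ∀ k, ∀ x ∈ L, (md D)^[k] x ∈ L := by
    intro k
    induction k with
    | zero => exact fun x hx => hx
    | succ k ih => exact fun x hx => ih _ (hmaps x hx)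
  obtain ⟨T, hTf, hT⟩ := Metric.totallyBounded_iff.1 hc.isCompact.totallyBounded (ε / 2) (by linarith)
  obtain ⟨F, hFL, hFc⟩ := hinf.exists_subset_card_eq (hTf.toFinset.card + 1)
  -- for each k a close pair
  have pair : ∀ k : ℕ, ∃ x ∈ F, ∃ y ∈ F, x ≠ y ∧ dist x y ≤ ε / 2 ^ k := by
    intro k
    have hch : ∀ x ∈ L, ∃ c ∈ T, dist ((md D)^[k] x) c < ε / 2 := by
      intro x hx
      have := hT (hmk k x hx)
      simpa using this
    choose! φ hφ1 hφ2 using hch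
    obtain ⟨x, hx, y, hy, hxy, hφ⟩ := Finset.exists_ne_map_eq_of_card_lt_of_maps_to
      (s := F) (t := hTf.toFinset) (f := φ) (by omega)
      (fun x hx => by simpa using hφ1 x (hFL hx))
    refine ⟨x, hx, y, hy, hxy, ?_⟩
    have hd : dist ((md D)^[k] x) ((md D)^[k] y) < ε := by
      have h1 := hφ2 x (hFL hx)
      have h2 := hφ2 y (hFL hy)
      rw [← hφ] at h2
      have := dist_triangle_right ((md D)^[k] x) ((md D)^[k] y) (φ x)
      linarith
    refine (iter k x (hFL hx) y (hFL hy) hd).trans ?_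
    gcongr
  -- minimal distance
  obtain ⟨η, hη, hmin⟩ : ∃ η > 0, ∀ x ∈ F, ∀ y ∈ F, x ≠ y → η ≤ dist x y := by
    have := (F.finite_toSet.isClosed (X := Circle1))
    by_cases hoff : (F.offDiag).Nonempty
    · obtain ⟨w, hw, hmin⟩ := F.offDiag.exists_min_image (fun w => dist w.1 w.2) hoff
      rw [Finset.mem_offDiag] at hw
      exact ⟨dist w.1 w.2, dist_pos.2 hw.2.2, fun x hx y hy hxy =>
        hmin (x, y) (Finset.mem_offDiag.2 ⟨hx, hy, hxy⟩)⟩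
    · refine ⟨1, one_pos, fun x hx y hy hxy => ?_⟩
      exact (hoff ⟨(x, y), Finset.mem_offDiag.2 ⟨hx, hy, hxy⟩⟩).elim
  obtain ⟨k, hk⟩ := pow_unbounded_of_one_lt (ε / η) (one_lt_two (α := ℝ))
  obtain ⟨x, hx, y, hy, hxy, hd⟩ := pair k
  have h1 := hmin x hx y hy hxy
  have h2 : ε / 2 ^ k < η := by
    rw [div_lt_iff₀ (by positivity)]
    rw [div_lt_iff₀ hη] at hk
    linarith
  linarith

lemma md_iter (D k : ℕ) : (md D)^[k] = md (D ^ k) := by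
  induction k with
  | zero => funext x; simp [md]
  | succ k ih =>
    funext x
    rw [Function.iterate_succ_apply', ih, pow_succ']
    simp only [md, mul_smul]

lemma Setup.pow {lam : RatLam} {θ : Circle1} {L : Set Circle1} {D : ℕ} (H : Setup lam θ L D)
    {k : ℕ} (hk : 0 < k) : Setup lam θ L (D ^ k) := by
  refine ⟨H.two_le.trans (Nat.le_self_pow hk.ne' D), H.irr, H.mem, ?_, ?_, ?_⟩
  · rw [← md_iter]
    clear hk
    induction k with
    | zero => exact fun x y h => h
    | succ k ih => exact fun x y h => ih _ _ (H.inv x y h)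
  · rw [← md_iter]
    clear hk
    induction k with
    | zero => exact fun x h => h
    | succ k ih => exact fun x h => ih _ (H.maps x h)
  · rw [← md_iter]
    clear hk
    induction k with
    | zero => exact fun x _ y _ h => h
    | succ k ih =>
      exact fun x hx y hy h => H.inj _ hx _ hy (ih _ (H.maps x hx) _ (H.maps y hy) h)

lemma setup_false {lam : RatLam} {θ : Circle1} {L : Set Circle1} {D : ℕ} (H : Setup lam θ L D)
    (hinf : L.Infinite) : False := by
  by_cases hr : ∃ c ∈ closure L, c ∈ ratC
  · obtain ⟨c, hc, hcr⟩ := hr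
    have hmapsC : ∀ k, (md D)^[k] c ∈ closure L ∧ (md D)^[k] c ∈ ratC := by
      intro k
      induction k with
      | zero => exact ⟨hc, hcr⟩
      | succ k ih =>
        rw [Function.iterate_succ_apply']
        refine ⟨?_, md_rat D ih.2⟩
        exact (show MapsTo (md D) L L from H.maps).closure (md_cont D) ih.1
    obtain ⟨q, hq⟩ := hcr
    have hq0 : q.den • c = 0 := by
      rw [hq, ← AddCircle.coe_nsmul, nsmul_eq_mul]
      refine (AddCircle.coe_eq_zero_iff (1 : ℝ)).2 ⟨q.num, ?_⟩
      have := Rat.den_mul_eq_num q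
      simp only [zsmul_eq_mul, mul_one]
      exact_mod_cast this.symm
    have hfin := AddCircle.finite_torsion (1 : ℝ) q.den_pos
    have htor : ∀ k, (md D)^[k] c ∈ {u : Circle1 | q.den • u = 0} := by
      intro k
      rw [md_iter]
      simp only [md, Set.mem_setOf_eq]
      rw [smul_comm, hq0, smul_zero]
    obtain ⟨a, b, hab, he⟩ : ∃ a b, a < b ∧ (md D)^[a] c = (md D)^[b] c :=
      hfin.exists_lt_map_eq_of_forall_mem htor
    obtain ⟨z, hz⟩ := c1_surj ((md D)^[a] c)
    have hk : 0 < b - a := by omega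
    refine no_fixed (H.pow hk) hinf.nonempty (z := z) ?_ ?_ ?_
    · rw [hz]; exact (hmapsC a).1
    · rw [hz]; exact (hmapsC a).2
    · rw [hz, ← md_iter, ← Function.iterate_add_apply, Nat.sub_add_cancel hab.le, he]
  · push Not at hr
    have hcl : IsClosed L := by
      apply isClosed_of_closure_subset
      intro y hy
      rw [H.mem]
      refine ⟨hr y hy, fun x hx => ?_⟩
      have h1 : L ⊆ connectedComponentIn (relClass lam.rel x)ᶜ θ := fun w hw => ((H.mem w).1 hw).2 x hx
      rcases comp_closure (cls_closed lam x) θ (closure_mono h1 hy) with h | h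
      · exact h
      · exact (hr y hy (cls_rat lam h)).elim
    exact compact_false H.two_le hcl hinf H.maps H.inj

/-- If `L` is an infinite `λ`-unlinked class which is periodic,
`m_d^n(L) = L` with `n > 0`, then the total degree `∏_{k<n} δ(m_d^k(L))` is `> 1`. -/
theorem periodic_infinite_class_total_degree_gt_one (d : ℕ) (hd : 2 ≤ d)
    (lam : InvRatLam d) (L : Set Circle1) (hL : IsUnlClass lam.rel L)
    (hinf : L.Infinite) (n : ℕ) (hn : 0 < n) (hper : (md d)^[n] '' L = L)
    (δf : ℕ → ℕ) (hδ : ∀ k < n, classDeg d ((md d)^[k] '' L) (δf k)) :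
    1 < ∏ k ∈ Finset.range n, δf k := by
  by_contra hcon
  push Not at hcon
  obtain ⟨θ, hθ, hLθ⟩ := hL
  have hne : L.Nonempty := hinf.nonempty
  have hpos : ∀ k ∈ Finset.range n, 1 ≤ δf k := by
    intro k hk
    have hk' := Finset.mem_range.1 hk
    obtain ⟨y, hy⟩ := hne
    have hx : (md d)^[k] y ∈ (md d)^[k] '' L := ⟨y, hy, rfl⟩
    have h := hδ k hk' _ ⟨_, hx, rfl⟩
    rw [← h, Nat.one_le_iff_ne_zero]
    refine Set.ncard_ne_zero_of_mem (a := (md d)^[k] y) ⟨hx, rfl⟩ ?_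
    have hfin := AddCircle.finite_torsion (1 : ℝ) (show 0 < d by omega)
    refine (hfin.image (fun u => u + (md d)^[k] y)).subset ?_
    rintro w ⟨-, hw⟩
    refine ⟨w - (md d)^[k] y, ?_, by simp⟩
    simp only [md] at hw ⊢
    simp only [Set.mem_setOf_eq, nsmul_sub]
    exact sub_eq_zero.2 hw
  have hone : ∀ k < n, δf k = 1 := by
    intro k hk
    have h1 := hpos k (Finset.mem_range.2 hk)
    have h2 := Finset.single_le_prod' hpos (Finset.mem_range.2 hk)
    exact le_antisymm (h2.trans hcon) h1
  have hstep : ∀ k < n, ∀ x ∈ (md d)^[k] '' L, ∀ y ∈ (md d)^[k] '' L, md d x = md d y → x = y := by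
    intro k hk x hx y hy h
    have := hδ k hk (md d x) ⟨x, hx, rfl⟩
    rw [hone k hk, Set.ncard_eq_one] at this
    obtain ⟨w, hw⟩ := this
    have h1 : x ∈ ({w} : Set Circle1) := by rw [← hw]; exact ⟨hx, rfl⟩
    have h2 : y ∈ ({w} : Set Circle1) := by rw [← hw]; exact ⟨hy, h.symm⟩
    rw [h1, h2]
  have hinj : ∀ k ≤ n, ∀ x ∈ L, ∀ y ∈ L, (md d)^[k] x = (md d)^[k] y → x = y := by
    intro k
    induction k with
    | zero => exact fun _ x _ y _ h => h
    | succ k ih =>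
      intro hk x hx y hy h
      rw [Function.iterate_succ_apply', Function.iterate_succ_apply'] at h
      exact ih (by omega) x hx y hy (hstep k (by omega) _ ⟨x, hx, rfl⟩ _ ⟨y, hy, rfl⟩ h)
  have hinv : ∀ x y, lam.rel x y → lam.rel (md d x) (md d y) := by
    intro x y h
    have := (lam.invariant x (lam.rel_rat _ _ h).1).1
    have h2 : md d y ∈ md d '' relClass lam.rel x := ⟨y, h, rfl⟩
    rw [this] at h2
    exact h2
  have H : Setup lam.toRatLam θ L (d ^ n) := by
    refine ⟨hd.trans (Nat.le_self_pow hn.ne' d), hθ, ?_, ?_, ?_, ?_⟩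
    · intro y
      rw [hLθ]
      simp only [UnlRel, Set.mem_setOf_eq]
      constructor
      · rintro ⟨-, h1, rfl | h2⟩
        · exact ⟨h1, fun x hx => mem_connectedComponentIn
            (fun h => hθ (cls_rat lam.toRatLam h))⟩
        · exact ⟨h1, h2⟩
      · rintro ⟨h1, h2⟩
        exact ⟨hθ, h1, Or.inr h2⟩
    · rw [← md_iter]
      clear hcon hper hδ hinj hstep hone hpos hn
      induction n with
      | zero => exact fun x y h => h
      | succ k ih => exact fun x y h => ih _ _ (hinv x y h)
    · rw [← md_iter]
      intro y hy
      have : (md d)^[n] y ∈ (md d)^[n] '' L := ⟨y, hy, rfl⟩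
      rwa [hper] at this
    · rw [← md_iter]
      exact hinj n le_rfl
  exact setup_false H hinf
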